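/- Let m ≥ 1, n ≥ 1 be integers and μ ∈ ℝ. Then the rational function w_{m,n}(z; μ) = T_{m−1,n}^{(μ)}(z) · T_{m−1,n+1}^{(μ)}(z) / (T_{m,n}^{(μ)}(z) · T_{m−2,n+1}^{(μ)}(z)) is a solution of P_V with parameters α = m²/2, β = −(m+2n+1+μ)²/2, γ = μ. -/

import Mathlib

noncomputable section

open Finset

/-- Generalized binomial coefficient `C(x, k)` for real `x`. -/
def genBinom (x : ℝ) (k : ℕ) : ℝ :=
  (∏ i ∈ Finset.range k, (x - i)) / (Nat.factorial k)

/-- Associated Laguerre polynomial `L_n^{(α)}(z)`, with the convention `L_n^{(α)} = 0` for `n < 0`. -/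
def lagL (n : ℤ) (α : ℝ) : ℝ → ℝ := fun z =>
  if n < 0 then 0
  else ∑ k ∈ Finset.range (n.toNat + 1),
    (-1 : ℝ) ^ k * genBinom ((n : ℝ) + α) (n.toNat - k) * z ^ k / (Nat.factorial k)

/-- Generalised Laguerre polynomial
`T_{m,n}^{(μ)}(z) = det[(d/dz)^{j+k} L_{m+n}^{(μ+1)}(z)]_{j,k=0}^{n-1}`
(with `T_{m,0}^{(μ)} = 1`, the empty determinant). -/
def genLag (m : ℤ) (n : ℕ) (μ : ℝ) : ℝ → ℝ := fun z =>
  Matrix.det (Matrix.of fun j k : Fin n =>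
    iteratedDeriv ((j : ℕ) + (k : ℕ)) (lagL (m + n) (μ + 1)) z)

/-- Wronskian `Wr(f_1, …, f_r)(z) = det[(d/dz)^{j-1} f_k(z)]`. -/
def wronskian {r : ℕ} (f : Fin r → ℝ → ℝ) : ℝ → ℝ := fun z =>
  Matrix.det (Matrix.of fun j k : Fin r => iteratedDeriv (j : ℕ) (f k) z)

/-- The constant `c_{m,n} = (-1)^{n(2m+1+n)/2} ∏_{j=1}^n (j-1)!/(m+j)!`. -/
def cmn (m n : ℕ) : ℝ :=
  (-1 : ℝ) ^ (n * (2 * m + 1 + n) / 2) *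
    ∏ j ∈ Finset.range n, (Nat.factorial j : ℝ) / (Nat.factorial (m + j + 1))

/-- `τ_{m,n}^{(μ)}(z) = det[(z d/dz)^{j+k} L_{m+n}^{(n+μ)}(z)]_{j,k=0}^{n-1}`. -/
def tauP (m : ℤ) (n : ℕ) (μ : ℝ) : ℝ → ℝ := fun z =>
  Matrix.det (Matrix.of fun j k : Fin n =>
    ((fun (g : ℝ → ℝ) => fun t => t * deriv g t)^[(j : ℕ) + (k : ℕ)]
      (lagL (m + n) ((n : ℝ) + μ))) z)

/-- Hirota bilinear operator `D_z(f • g) = f' g - f g'`. -/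
def hirota (f g : ℝ → ℝ) (z : ℝ) : ℝ := deriv f z * g z - f z * deriv g z

/-- Probabilists' Hermite polynomial `He_n` as a real function. -/
def He (n : ℕ) : ℝ → ℝ := fun z => Polynomial.aeval z (Polynomial.hermite n)

/-- The fifth Painlevé equation (with `δ = -1/2`) for `w` with parameters `(a, b, c)`,
holding at the point `z`. -/
def PV (a b c : ℝ) (w : ℝ → ℝ) (z : ℝ) : Prop :=
  iteratedDeriv 2 w z =
    (1 / (2 * w z) + 1 / (w z - 1)) * (deriv w z) ^ 2
      - (1 / z) * deriv w z
      + (w z - 1) ^ 2 * (a * (w z) ^ 2 + b) / (z ^ 2 * w z)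
      + c * w z / z
      - w z * (w z + 1) / (2 * (w z - 1))

/-- The Jimbo–Miwa–Okamoto `σ`-equation `S_V` with parameters `(ν₁, ν₂, ν₃)`,
holding at the point `z`. -/
def SV (ν₁ ν₂ ν₃ : ℝ) (σ : ℝ → ℝ) (z : ℝ) : Prop :=
  (z * iteratedDeriv 2 σ z) ^ 2 =
    (2 * (deriv σ z) ^ 2 + (ν₁ + ν₂ + ν₃ - z) * deriv σ z + σ z) ^ 2
      - 4 * deriv σ z * (deriv σ z + ν₁) * (deriv σ z + ν₂) * (deriv σ z + ν₃)

/-!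
Write `f = L_{m+n}^{(μ+1)}` and `g = L_{m+n-1}^{(μ+1)}`, and let `τ_k(f) = det (f^(i+j))_{i,j<k}`,
so that `w = τ_n(g) τ_{n+1}(f) / (τ_n(f) τ_{n+1}(g))`. By the Desnanot–Jacobi identity the
determinants `τ_k(f)` and `τ_k(g)` satisfy the Toda equation `τ_{k+2} τ_k = τ_{k+1} τ_{k+1}′′ -
(τ_{k+1}′)²`, that is, `τ_{k+2} τ_k / τ_{k+1}²` is the second logarithmic derivative of `τ_{k+1}`.
For `k = 0` the contiguity relations of the Laguerre polynomials make `f / g` a Riccati solution of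
the Hamiltonian system of `P_V`. Inductively, the Hamiltonian is `z` times the logarithmic
derivative of `τ_{k+1}(f)`; the Toda equation computes `τ_{k+2}` from its derivative, and the
quotient for `k + 1` turns out to be the Bäcklund transform of the one for `k`. All this takes place
in the field of rational functions, where the determinants and the quantities to be inverted are
nonzero for degree reasons, and is then evaluated at a point.
-/

open scoped Differential Polynomial

/-! ### The Hamiltonian form of `P_V` and its Bäcklund transformation -/

section PainleveV

variable {K : Type*} [Field K]

/-- The fifth Painlevé equation with `δ = -1/2` as an algebraic relation between the values of `z`,
`w` and the first two derivatives `w₁`, `w₂` of `w`. -/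
def PainleveVRel (α β γ z w w₁ w₂ : K) : Prop :=
  w₂ = (1 / (2 * w) + 1 / (w - 1)) * w₁ ^ 2 - 1 / z * w₁
    + (w - 1) ^ 2 * (α * w ^ 2 + β) / (z ^ 2 * w) + γ * w / z - w * (w + 1) / (2 * (w - 1))

/-- `hamPV + p` is a Hamiltonian of `PVSystem` with respect to the bracket `{w, p} = w - 1`; this
normalisation makes `hamPV` equal to `z` times the logarithmic derivative of a `τ`-function. -/
def hamPV (z N a j w p : K) : K :=
  p * (w * p - j * w - (j + a + 1) + N * (w - 1)) - z * (w * p - (j + a)) / (w - 1) + (j - N) * z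

/-- Numerator of the Bäcklund transform `backlundW` of `w`. It arises from the Toda equation for the
`τ`-function whose logarithmic derivative is `hamPV / z`, see `PVSystem.deriv_hamPV`. -/
def backlundNum (z a j w p : K) : K :=
  (j + 1) * ((w - 1) * p) - (p - (j + a)) * ((w - 1) * p - z)

/-- Denominator of the Bäcklund transform `backlundW` of `w`. It arises from the Toda equation for
the second `τ`-function, see `PVSystem.deriv_hamPV_sub`. -/
def backlundDen (z a j w p : K) : K :=
  (j + 1) * ((w - 1) * p) - (w * p - (j + a)) * ((w - 1) * p - z)

/-- The `w`-component of the Bäcklund transformation of `PVSystem` that raises `j` by one. -/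
def backlundW (z a j w p : K) : K := backlundNum z a j w p / backlundDen z a j w p

/-- The `p`-component of the Bäcklund transformation of `PVSystem` that raises `j` by one. -/
def backlundP (z N a j w p : K) : K :=
  (N + (j + 1) + a) / backlundW z a j w p - backlundDen z a j w p / ((w - 1) * p) + (j + 1) - N

section Algebra

variable {z N a j w p : K}

theorem backlundW_mul_backlundDen (hv : backlundDen z a j w p ≠ 0) :
    backlundW z a j w p * backlundDen z a j w p = backlundNum z a j w p :=
  div_mul_cancel₀ _ hv

theorem backlundW_sub_one_mul_backlundDen (hv : backlundDen z a j w p ≠ 0) :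
    (backlundW z a j w p - 1) * backlundDen z a j w p = (w - 1) * p * ((w - 1) * p - z) := by
  rw [sub_mul, backlundW_mul_backlundDen hv, backlundNum, backlundDen]
  ring

theorem backlundW_mul_backlundP (hw : w - 1 ≠ 0) (hp : p ≠ 0) (hu : backlundNum z a j w p ≠ 0)
    (hv : backlundDen z a j w p ≠ 0) :
    backlundW z a j w p * ((w - 1) * p * (backlundP z N a j w p + N - (j + 1))
      + backlundDen z a j w p) = (w - 1) * p * (N + (j + 1) + a) := by
  have hW : backlundW z a j w p ≠ 0 := div_ne_zero hu hv
  rw [backlundP]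
  field_simp
  ring

theorem backlundW_momentum (hw : w - 1 ≠ 0) (hp : p ≠ 0)
    (hu : backlundNum z a j w p ≠ 0) (hv : backlundDen z a j w p ≠ 0) :
    (backlundW z a j w p - 1) * (backlundW z a j w p *
        (2 * backlundP z N a j w p + N - (j + 1)) - (N + (j + 1) + a)) =
      backlundW z a j w p *
        ((backlundW z a j w p - 1) * backlundP z N a j w p - (w - 1) * p + z) := by
  have hd : (w - 1) * p ≠ 0 := mul_ne_zero hw hp
  refine mul_left_cancel₀ hd ?_
  linear_combination (backlundW z a j w p - 1) * backlundW_mul_backlundP (N := N) hw hp hu hv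
    - backlundW z a j w p * backlundW_sub_one_mul_backlundDen hv

theorem hamPV_backlund (hw : w - 1 ≠ 0) (hp : p ≠ 0) (hd : (w - 1) * p - z ≠ 0)
    (hu : backlundNum z a j w p ≠ 0) (hv : backlundDen z a j w p ≠ 0) :
    hamPV z N a (j + 1) (backlundW z a j w p) (backlundP z N a j w p) =
      hamPV z N a j w p + (backlundW z a j w p - 1) * (backlundP z N a j w p + N - (j + 1))
        - a - 2 * (j + 1) := by
  have hd0 : (w - 1) * p ≠ 0 := mul_ne_zero hw hp
  have hVv := backlundW_sub_one_mul_backlundDen hv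
  have hH : hamPV z N a j w p = (backlundNum z a j w p * backlundDen z a j w p
      + (N - (j + 1)) * ((w - 1) * p) * (backlundNum z a j w p - z * ((w - 1) * p - z))
      - (j + 1 + a) * backlundDen z a j w p * ((w - 1) * p - z)
      - backlundDen z a j w p * N * ((w - 1) * p)
      + backlundNum z a j w p * ((w - 1) * p - z)) / ((w - 1) * p * ((w - 1) * p - z)) := by
    rw [eq_div_iff (mul_ne_zero hd0 hd), hamPV, backlundNum, backlundDen]
    field_simp
    ring
  have hV : backlundW z a j w p - 1 = (w - 1) * p * ((w - 1) * p - z) / backlundDen z a j w p :=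
    eq_div_of_mul_eq hv hVv
  have huv : backlundNum z a j w p = backlundDen z a j w p + (w - 1) * p * ((w - 1) * p - z) := by
    rw [← hVv, sub_mul, backlundW_mul_backlundDen hv]
    ring
  rw [hamPV, hH, hV, backlundP, backlundW]
  generalize backlundNum z a j w p = u at *
  generalize backlundDen z a j w p = v at *
  generalize (w - 1) * p = d at *
  field_simp
  rw [huv]
  ring

end Algebra

variable [Differential K]

/-- A Hamiltonian form of `P_V`: a first-order system for `w` and a momentum `p` over a field with
derivation `d/dz`. Eliminating `p` gives `P_V` with `α = (N - j)² / 2`, `β = -(N + j + a)² / 2`,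
`γ = a - 1`. -/
structure PVSystem (z N a j w p : K) : Prop where
  deriv_z : z′ = 1
  deriv_N : N′ = 0
  deriv_a : a′ = 0
  deriv_j : j′ = 0
  w_sub_one_ne_zero : w - 1 ≠ 0
  deriv_w : z * w′ = (w - 1) * (w * (2 * p + N - j) - (N + j + a)) - z * w
  deriv_p : z * p′ = -(w - 1) * p * (p + N - j) - z * (p - (j + a)) / (w - 1)

namespace PVSystem
variable {z N a j w p : K} (h : PVSystem z N a j w p)
include h

theorem z_ne_zero : z ≠ 0 := by
  rintro rfl
  simpa using h.deriv_z

theorem deriv_w_eq : w′ = ((w - 1) * (w * (2 * p + N - j) - (N + j + a)) - z * w) / z := by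
  rw [← h.deriv_w, mul_div_cancel_left₀ _ h.z_ne_zero]

theorem deriv_p_eq :
    p′ = (-(w - 1) * p * (p + N - j) - z * (p - (j + a)) / (w - 1)) / z := by
  rw [← h.deriv_p, mul_div_cancel_left₀ _ h.z_ne_zero]

theorem painleveV [NeZero (2 : K)] (hw : w ≠ 0) :
    PainleveVRel ((N - j) ^ 2 / 2) (-(N + j + a) ^ 2 / 2) (a - 1) z w w′ w′′ := by
  have h2 : (2 : K) ≠ 0 := NeZero.ne 2
  have hz := h.z_ne_zero
  have hw1 := h.w_sub_one_ne_zero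
  have hw'' := congrArg (·′) h.deriv_w
  simp only [Derivation.leibniz, map_add, map_sub, smul_eq_mul, h.deriv_z, h.deriv_N, h.deriv_a,
    h.deriv_j, Derivation.map_one_eq_zero,
    show (2 : K)′ = 0 from Derivation.map_natCast _ 2] at hw''
  rw [PainleveVRel]
  generalize w′′ = w2 at *
  simp only [h.deriv_w_eq, h.deriv_p_eq] at hw'' ⊢
  field_simp at hw'' ⊢
  linear_combination 2 * (w - 1) * w * hw''

theorem deriv_hamPV :
    z * (hamPV z N a j w p)′ = hamPV z N a j w p + backlundNum z a j w p / (w - 1) := by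
  have hz := h.z_ne_zero
  have hw1 := h.w_sub_one_ne_zero
  simp only [hamPV, backlundNum, Derivation.leibniz, Derivation.leibniz_div, map_add, map_sub,
    smul_eq_mul, h.deriv_z, h.deriv_N, h.deriv_a, h.deriv_j, h.deriv_w_eq, h.deriv_p_eq,
    Derivation.map_one_eq_zero]
  field_simp
  ring

theorem deriv_hamPV_sub :
    z * (hamPV z N a j w p - (w - 1) * p + z)′ =
      hamPV z N a j w p - (w - 1) * p + z + w * backlundDen z a j w p / (w - 1) := by
  have hz := h.z_ne_zero
  have hw1 := h.w_sub_one_ne_zero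
  simp only [hamPV, backlundDen, Derivation.leibniz, Derivation.leibniz_div, map_add, map_sub,
    smul_eq_mul, h.deriv_z, h.deriv_N, h.deriv_a, h.deriv_j, h.deriv_w_eq, h.deriv_p_eq,
    Derivation.map_one_eq_zero]
  field_simp
  ring

theorem deriv_w_sub_one_mul_p :
    z * ((w - 1) * p)′ =
      (w - 1) * p * (2 * w * p - (2 * j + a) - z * w / (w - 1) - (w - 1) * p)
        - z * (p - (j + a)) := by
  have hz := h.z_ne_zero
  have hw1 := h.w_sub_one_ne_zero
  simp only [Derivation.leibniz, map_sub, smul_eq_mul, h.deriv_w_eq, h.deriv_p_eq,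
    Derivation.map_one_eq_zero]
  field_simp
  ring

theorem deriv_w_sub_one_mul_p_mul_sub :
    z * ((w - 1) * p * ((w - 1) * p - z))′ =
      (w - 1) * p * ((w - 1) * p - z) *
          (2 * w * p - (2 * j + a) - z * w / (w - 1) + 2 * (j + 1) + a)
        - backlundNum z a j w p * (2 * ((w - 1) * p) - z) := by
  have hw1 := h.w_sub_one_ne_zero
  have hleib : z * ((w - 1) * p * ((w - 1) * p - z))′ =
      z * ((w - 1) * p)′ * (2 * ((w - 1) * p) - z) - (w - 1) * p * z := by
    rw [Derivation.leibniz _ ((w - 1) * p), map_sub _ _ z, h.deriv_z]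
    simp only [smul_eq_mul]
    ring
  rw [hleib, h.deriv_w_sub_one_mul_p, backlundNum]
  field_simp
  ring

theorem deriv_backlundDen :
    z * (backlundDen z a j w p)′ =
      backlundDen z a j w p * (2 * w * p - (2 * j + a) - z * w / (w - 1))
        + (N - (j + 1)) * ((w - 1) * p * ((w - 1) * p - z)) := by
  have hz := h.z_ne_zero
  have hw1 := h.w_sub_one_ne_zero
  simp only [backlundDen, Derivation.leibniz, map_add, map_sub, smul_eq_mul, h.deriv_z, h.deriv_a,
    h.deriv_j, h.deriv_w_eq, h.deriv_p_eq, Derivation.map_one_eq_zero]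
  field_simp
  ring

theorem deriv_backlundW (hp : p ≠ 0) (hu : backlundNum z a j w p ≠ 0)
    (hv : backlundDen z a j w p ≠ 0) :
    z * (backlundW z a j w p)′ = backlundW z a j w p *
      ((backlundW z a j w p - 1) * backlundP z N a j w p - (w - 1) * p) := by
  have hw1 := h.w_sub_one_ne_zero
  have hWv := backlundW_mul_backlundDen hv
  have hVv := backlundW_sub_one_mul_backlundDen hv
  have hWP := backlundW_mul_backlundP (N := N) hw1 hp hu hv
  have hv' := h.deriv_backlundDen
  have hdd' := h.deriv_w_sub_one_mul_p_mul_sub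
  -- `backlundW` is differentiated implicitly, through the relation `hVv` free of denominators.
  have hVv' := congrArg (·′) hVv
  set u := backlundNum z a j w p
  set v := backlundDen z a j w p
  set W := backlundW z a j w p
  set P := backlundP z N a j w p
  set d := (w - 1) * p
  rw [Derivation.leibniz _ (W - 1), map_sub _ W, Derivation.map_one_eq_zero, sub_zero, smul_eq_mul,
    smul_eq_mul] at hVv'
  refine mul_left_cancel₀ hv ?_
  linear_combination z * hVv' + hdd' - (W - 1) * hv'
    - (2 * w * p - (2 * j + a) - z * w / (w - 1) + W * P) * hVv - (d - z) * hWP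
    + (2 * d - z) * hWv

theorem deriv_backlundP (hp : p ≠ 0) (hu : backlundNum z a j w p ≠ 0)
    (hv : backlundDen z a j w p ≠ 0) (hdz : (w - 1) * p - z ≠ 0) :
    z * (backlundP z N a j w p)′ =
      -(backlundW z a j w p - 1) * backlundP z N a j w p * (backlundP z N a j w p + N - (j + 1))
        - z * (backlundP z N a j w p - (j + 1 + a)) / (backlundW z a j w p - 1) := by
  have hw1 := h.w_sub_one_ne_zero
  have hW : backlundW z a j w p ≠ 0 := div_ne_zero hu hv
  have hd0 : (w - 1) * p ≠ 0 := mul_ne_zero hw1 hp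
  have hWv := backlundW_mul_backlundDen hv
  have hVv := backlundW_sub_one_mul_backlundDen hv
  have hWP := backlundW_mul_backlundP (N := N) hw1 hp hu hv
  have hv' := h.deriv_backlundDen
  have hW' := h.deriv_backlundW hp hu hv
  have hd' := h.deriv_w_sub_one_mul_p
  have hu_def := backlundNum.eq_def z a j w p
  -- `backlundP` is differentiated implicitly, through the relation `hWP` free of denominators.
  have hWP' := congrArg (·′) hWP
  have hV0 : backlundW z a j w p - 1 ≠ 0 := left_ne_zero_of_mul (hVv ▸ mul_ne_zero hd0 hdz)
  set u := backlundNum z a j w p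
  set v := backlundDen z a j w p
  set W := backlundW z a j w p
  set P := backlundP z N a j w p
  set d := (w - 1) * p
  simp only [Derivation.leibniz _ W, Derivation.leibniz _ d, map_sub, map_add, smul_eq_mul,
    Derivation.map_one_eq_zero, h.deriv_N, h.deriv_a, h.deriv_j] at hWP'
  have hP' : d ^ 2 * (z * P′) =
      -d * (d * (P + N - (j + 1)) + v) * ((W - 1) * P - d) - d * (z * v′) + v * (z * d′) := by
    refine mul_left_cancel₀ hW ?_
    linear_combination d * z * hWP' - d * (d * (P + N - (j + 1)) + v) * hW' - (z * d′) * hWP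
  rw [eq_sub_iff_add_eq, ← eq_sub_iff_add_eq', div_eq_iff hV0]
  refine mul_left_cancel₀ (mul_ne_zero (pow_ne_zero 2 hd0) hv) ?_
  linear_combination d ^ 2 * (z * P′ + (W - 1) * P * (P + N - (j + 1)) - (d - z) * P
      - z * (P + N - (j + 1))) * hVv
    + d * (d - z) * hP' - d ^ 2 * (d - z) * hv' - d * z * v * hWv
    + d * z * v * hWP + d * v * ((d - z) * hd' - z * hu_def)

theorem backlund (hp : p ≠ 0) (hu : backlundNum z a j w p ≠ 0)
    (hv : backlundDen z a j w p ≠ 0) (hdz : (w - 1) * p - z ≠ 0) :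
    PVSystem z N a (j + 1) (backlundW z a j w p) (backlundP z N a j w p) where
  deriv_z := h.deriv_z
  deriv_N := h.deriv_N
  deriv_a := h.deriv_a
  deriv_j := by rw [map_add, h.deriv_j, Derivation.map_one_eq_zero, add_zero]
  w_sub_one_ne_zero := left_ne_zero_of_mul (backlundW_sub_one_mul_backlundDen hv ▸
    mul_ne_zero (mul_ne_zero h.w_sub_one_ne_zero hp) hdz)
  deriv_w := by
    rw [h.deriv_backlundW hp hu hv, backlundW_momentum h.w_sub_one_ne_zero hp hu hv]
    ring
  deriv_p := h.deriv_backlundP hp hu hv hdz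

theorem logDeriv_backlundW (hp : p ≠ 0) (hu : backlundNum z a j w p ≠ 0)
    (hv : backlundDen z a j w p ≠ 0) :
    z * Differential.logDeriv (backlundW z a j w p) =
      (backlundW z a j w p - 1) * backlundP z N a j w p - (w - 1) * p := by
  have hW0 : backlundW z a j w p ≠ 0 := div_ne_zero hu hv
  rw [Differential.logDeriv, ← mul_div_assoc, h.deriv_backlundW hp hu hv,
    mul_div_cancel_left₀ _ hW0]

theorem logDeriv_backlundNum (hp : p ≠ 0) (hu : backlundNum z a j w p ≠ 0)
    (hv : backlundDen z a j w p ≠ 0) :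
    z * Differential.logDeriv (backlundNum z a j w p / (w - 1)) =
      (backlundW z a j w p - 1) * (backlundP z N a j w p + N - (j + 1))
        - (w - 1) * (p + N - j) := by
  have hw1 := h.w_sub_one_ne_zero
  have hW0 : backlundW z a j w p ≠ 0 := div_ne_zero hu hv
  have hW := h.logDeriv_backlundW hp hu hv
  have hv' : z * Differential.logDeriv (backlundDen z a j w p) =
      2 * w * p - (2 * j + a) - z * w / (w - 1) + (N - (j + 1)) * (backlundW z a j w p - 1) := by
    rw [Differential.logDeriv, ← mul_div_assoc, h.deriv_backlundDen,
      ← backlundW_sub_one_mul_backlundDen hv]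
    field_simp
  have hw' : z * Differential.logDeriv (w - 1) =
      w * (2 * p + N - j) - (N + j + a) - z * w / (w - 1) := by
    rw [Differential.logDeriv, ← mul_div_assoc, map_sub, Derivation.map_one_eq_zero,
      sub_zero, h.deriv_w]
    field_simp
  rw [← backlundW_mul_backlundDen hv, Differential.logDeriv_div _ _ (mul_ne_zero hW0 hv) hw1,
    Differential.logDeriv_mul _ _ hW0 hv]
  linear_combination hW + hv' - hw'

end PVSystem

/-! ### `P_V` and Toda chains -/

theorem deriv_logDeriv {f : K} (hf : f ≠ 0) :
    (Differential.logDeriv f)′ = (f * f′′ - f′ ^ 2) / f ^ 2 := by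
  rw [Differential.logDeriv, Derivation.leibniz_div]
  simp only [smul_eq_mul]
  field_simp

theorem mul_logDeriv_of_mul_deriv_eq {z N a f g : K} (hf : f ≠ 0)
    (h : z * f′ = N * f - (N + a) * g) :
    z * Differential.logDeriv f = N - (N + a) / (f / g) := by
  rw [Differential.logDeriv, ← mul_div_assoc, h]
  field_simp

theorem logDeriv_of_deriv_eq_sub {f g : K} (hf : f ≠ 0) (hg : g ≠ 0) (h : f′ = g′ - g) :
    Differential.logDeriv g = 1 + f / g * Differential.logDeriv f := by
  rw [Differential.logDeriv, Differential.logDeriv]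
  field_simp
  linear_combination -h

/-- A solution of `PVSystem` expressed through consecutive members `F₀`, `F₁` and `G₀`, `G₁` of two
sequences of `τ`-functions. The last field is what links the two sequences; its left side is
`z` times the logarithmic derivative of `e ^ z * F₁ / G₁`. -/
structure PVTauState (z N a j w p F₀ F₁ G₀ G₁ : K) : Prop extends PVSystem z N a j w p where
  p_ne_zero : p ≠ 0
  w_mul : w * (F₀ * G₁) = F₁ * G₀
  logDeriv_F : z * Differential.logDeriv F₁ = hamPV z N a j w p
  logDeriv_F_sub : z * (Differential.logDeriv F₁ - Differential.logDeriv F₀) =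
    (w - 1) * (p + N - j) - a - 2 * j
  logDeriv_F_sub_G : z * (1 + Differential.logDeriv F₁ - Differential.logDeriv G₁) =
    (w - 1) * p

namespace PVTauState

theorem base {z N a F₁ G₁ : K} (hz : z′ = 1) (hN : N′ = 0) (ha : a′ = 0)
    (hF : F₁ ≠ 0) (hG : G₁ ≠ 0)
    (hE : 1 + Differential.logDeriv F₁ - Differential.logDeriv G₁ ≠ 0)
    (h₁ : z * F₁′ = N * F₁ - (N + a) * G₁) (h₂ : F₁′ = G₁′ - G₁) :
    PVTauState z N a 0 (F₁ / G₁) ((N + a) / (F₁ / G₁) - N) 1 F₁ 1 G₁ := by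
  have hz0 : z ≠ 0 := by rintro rfl; simp at hz
  have hw0 : F₁ / G₁ ≠ 0 := div_ne_zero hF hG
  have hlF := (mul_logDeriv_of_mul_deriv_eq hF h₁).trans (neg_sub _ _).symm
  have hlG := logDeriv_of_deriv_eq_sub hF hG h₂
  have hw' : (F₁ / G₁)′ = F₁ / G₁ * (Differential.logDeriv F₁ - Differential.logDeriv G₁) := by
    rw [← Differential.logDeriv_div _ _ hF hG, Differential.logDeriv, mul_div_cancel₀ _ hw0]
  have hp : F₁ / G₁ * ((N + a) / (F₁ / G₁) - N + N) = N + a := by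
    rw [sub_add_cancel, mul_div_cancel₀ _ hw0]
  have hwmul : F₁ / G₁ * (1 * G₁) = F₁ * 1 := by field_simp
  generalize (N + a) / (F₁ / G₁) - N = p at *
  generalize F₁ / G₁ = w at *
  have hp' := congrArg (·′) hp
  simp only [Derivation.leibniz, map_add, smul_eq_mul, hN, ha, add_zero] at hp'
  have hFG : z * (1 + Differential.logDeriv F₁ - Differential.logDeriv G₁) = (w - 1) * p := by
    linear_combination (1 - w) * hlF - z * hlG
  have hd := hFG ▸ mul_ne_zero hz0 hE
  have hw1 := left_ne_zero_of_mul hd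
  have hpole : z * (w * p - a) / (w - 1) = -(z * N) := by
    rw [div_eq_iff hw1]
    linear_combination z * hp
  have hpole' : z * (p - a) / (w - 1) = -(z * (p + N)) := by
    rw [div_eq_iff hw1]
    linear_combination z * hp
  refine ⟨⟨hz, hN, ha, map_zero _, hw1, ?_, ?_⟩, right_ne_zero_of_mul hd, hwmul, ?_, ?_, hFG⟩
  · linear_combination z * hw' + w * hFG - (w - 1) * hp
  · refine mul_left_cancel₀ hw0 ?_
    rw [zero_add, hpole']
    linear_combination z * hp' - z * (p + N) * hw' - w * (p + N) * hFG
  · rw [hamPV, zero_add, hpole, hlF]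
    linear_combination -p * hp
  · rw [Differential.logDeriv_one, sub_zero, hlF]
    linear_combination -hp

variable {z N a j w p F₀ F₁ F₂ G₀ G₁ G₂ : K} (h : PVTauState z N a j w p F₀ F₁ G₀ G₁)
include h

theorem sq_mul_toda_F (hF₁ : F₁ ≠ 0) (hF : F₂ * F₀ = F₁ * F₁′′ - F₁′ ^ 2) :
    z ^ 2 * (F₂ * F₀ / F₁ ^ 2) = backlundNum z a j w p / (w - 1) := by
  rw [hF, ← deriv_logDeriv hF₁]
  have hlF := congrArg (·′) h.logDeriv_F
  simp only [Derivation.leibniz, smul_eq_mul, h.deriv_z] at hlF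
  linear_combination z * hlF + h.deriv_hamPV - h.logDeriv_F

theorem sq_mul_toda_G (hG₁ : G₁ ≠ 0) (hG : G₂ * G₀ = G₁ * G₁′′ - G₁′ ^ 2) :
    z ^ 2 * (G₂ * G₀ / G₁ ^ 2) = w * backlundDen z a j w p / (w - 1) := by
  rw [hG, ← deriv_logDeriv hG₁]
  have hlG : z * Differential.logDeriv G₁ = hamPV z N a j w p - (w - 1) * p + z := by
    linear_combination h.logDeriv_F - h.logDeriv_F_sub_G
  have hlG' := congrArg (·′) hlG
  simp only [Derivation.leibniz, smul_eq_mul, h.deriv_z] at hlG'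
  linear_combination z * hlG' + h.deriv_hamPV_sub - hlG

theorem backlundW_mul (hF₀ : F₀ ≠ 0) (hF₁ : F₁ ≠ 0) (hG₀ : G₀ ≠ 0) (hG₁ : G₁ ≠ 0)
    (hv : backlundDen z a j w p ≠ 0)
    (hFu : z ^ 2 * (F₂ * F₀ / F₁ ^ 2) = backlundNum z a j w p / (w - 1))
    (hGv : z ^ 2 * (G₂ * G₀ / G₁ ^ 2) = w * backlundDen z a j w p / (w - 1)) :
    backlundW z a j w p * (F₁ * G₂) = F₂ * G₁ := by
  have hratio : w * backlundDen z a j w p * (F₂ * F₀ / F₁ ^ 2) =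
      backlundNum z a j w p * (G₂ * G₀ / G₁ ^ 2) := by
    refine mul_left_cancel₀ (pow_ne_zero 2 h.z_ne_zero) ?_
    linear_combination w * backlundDen z a j w p * hFu - backlundNum z a j w p * hGv
  have hw := h.w_mul
  rw [← eq_div_iff (mul_ne_zero hF₀ hG₁)] at hw
  rw [backlundW, div_mul_eq_mul_div, div_eq_iff hv]
  generalize backlundDen z a j w p = v at *
  generalize backlundNum z a j w p = u at *
  subst hw
  field_simp at hratio
  linear_combination -hratio

theorem logDeriv_F_sub_succ (hu : backlundNum z a j w p ≠ 0) (hv : backlundDen z a j w p ≠ 0)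
    (hF₀ : F₀ ≠ 0) (hF₁ : F₁ ≠ 0) (hF₂ : F₂ ≠ 0)
    (hFu : z ^ 2 * (F₂ * F₀ / F₁ ^ 2) = backlundNum z a j w p / (w - 1)) :
    z * (Differential.logDeriv F₂ - Differential.logDeriv F₁) =
      (backlundW z a j w p - 1) * (backlundP z N a j w p + N - (j + 1)) - a - 2 * (j + 1) := by
  have hz := h.z_ne_zero
  have hlu := h.logDeriv_backlundNum h.p_ne_zero hu hv
  rw [← hFu, Differential.logDeriv_mul _ _ (by positivity) (by positivity),
    Differential.logDeriv_div _ _ (by positivity) (by positivity),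
    Differential.logDeriv_mul _ _ hF₂ hF₀, Differential.logDeriv_pow, Differential.logDeriv_pow,
    Differential.logDeriv.eq_def z, h.deriv_z] at hlu
  push_cast at hlu
  linear_combination hlu - 2 * mul_one_div_cancel hz + h.logDeriv_F_sub

theorem logDeriv_F_sub_G_succ (hu : backlundNum z a j w p ≠ 0) (hv : backlundDen z a j w p ≠ 0)
    (hF₁ : F₁ ≠ 0) (hF₂ : F₂ ≠ 0) (hG₁ : G₁ ≠ 0) (hG₂ : G₂ ≠ 0)
    (hW : backlundW z a j w p * (F₁ * G₂) = F₂ * G₁) :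
    z * (1 + Differential.logDeriv F₂ - Differential.logDeriv G₂) =
      (backlundW z a j w p - 1) * backlundP z N a j w p := by
  have hlW := congrArg (z * Differential.logDeriv ·)
    (eq_div_of_mul_eq (mul_ne_zero hF₁ hG₂) hW)
  simp only [Differential.logDeriv_div _ _ (mul_ne_zero hF₂ hG₁) (mul_ne_zero hF₁ hG₂),
    Differential.logDeriv_mul _ _ hF₂ hG₁, Differential.logDeriv_mul _ _ hF₁ hG₂] at hlW
  linear_combination h.logDeriv_backlundW h.p_ne_zero hu hv - hlW + h.logDeriv_F_sub_G

theorem succ (hF₀ : F₀ ≠ 0) (hF₁ : F₁ ≠ 0) (hF₂ : F₂ ≠ 0) (hG₀ : G₀ ≠ 0) (hG₁ : G₁ ≠ 0)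
    (hG₂ : G₂ ≠ 0) (hE : 1 + Differential.logDeriv F₂ - Differential.logDeriv G₂ ≠ 0)
    (hF : F₂ * F₀ = F₁ * F₁′′ - F₁′ ^ 2) (hG : G₂ * G₀ = G₁ * G₁′′ - G₁′ ^ 2) :
    PVTauState z N a (j + 1) (backlundW z a j w p) (backlundP z N a j w p) F₁ F₂ G₁ G₂ := by
  have hz := h.z_ne_zero
  have hp := h.p_ne_zero
  have hFu := h.sq_mul_toda_F hF₁ hF
  have hGv := h.sq_mul_toda_G hG₁ hG
  have hu : backlundNum z a j w p ≠ 0 :=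
    (div_ne_zero_iff.mp (hFu ▸ by positivity : backlundNum z a j w p / (w - 1) ≠ 0)).1
  have hv : backlundDen z a j w p ≠ 0 := right_ne_zero_of_mul
    (div_ne_zero_iff.mp (hGv ▸ by positivity : w * backlundDen z a j w p / (w - 1) ≠ 0)).1
  have hW := h.backlundW_mul hF₀ hF₁ hG₀ hG₁ hv hFu hGv
  have hlF := h.logDeriv_F_sub_succ hu hv hF₀ hF₁ hF₂ hFu
  have hlFG := h.logDeriv_F_sub_G_succ hu hv hF₁ hF₂ hG₁ hG₂ hW
  have hWP := hlFG ▸ mul_ne_zero hz hE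
  have hdz : (w - 1) * p - z ≠ 0 := right_ne_zero_of_mul
    (backlundW_sub_one_mul_backlundDen hv ▸ mul_ne_zero (left_ne_zero_of_mul hWP) hv)
  refine ⟨h.toPVSystem.backlund hp hu hv hdz, right_ne_zero_of_mul hWP, hW, ?_, hlF, hlFG⟩
  rw [hamPV_backlund h.w_sub_one_ne_zero hp hdz hu hv]
  linear_combination h.logDeriv_F + hlF

end PVTauState

end PainleveV

/-! ### The Desnanot–Jacobi identity and the Toda equation -/

section Jacobi

variable {m R : Type*} [Fintype m] [DecidableEq m] [CommRing R]

/-- The minor of `M` keeping all the rows and columns of the first block together with one further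
row `i` and one further column `j`. -/
def borderedMinor (M : Matrix (m ⊕ Fin 2) (m ⊕ Fin 2) R) (i j : Fin 2) : R :=
  (M.submatrix (Sum.map id fun _ : Fin 1 => i) (Sum.map id fun _ : Fin 1 => j)).det

theorem map_borderedMinor {S : Type*} [CommRing S] (f : R →+* S)
    (M : Matrix (m ⊕ Fin 2) (m ⊕ Fin 2) R) (i j : Fin 2) :
    f (borderedMinor M i j) = borderedMinor (M.map f) i j := by
  rw [borderedMinor, borderedMinor, f.map_det, RingHom.mapMatrix_apply, Matrix.submatrix_map]

theorem borderedMinor_eq_det_mul_schur (M : Matrix (m ⊕ Fin 2) (m ⊕ Fin 2) R)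
    [Invertible M.toBlocks₁₁] (i j : Fin 2) :
    borderedMinor M i j = M.toBlocks₁₁.det *
      (M.toBlocks₂₂ - M.toBlocks₂₁ * ⅟M.toBlocks₁₁ * M.toBlocks₁₂) i j := by
  have hM : M.submatrix (Sum.map id fun _ : Fin 1 => i) (Sum.map id fun _ : Fin 1 => j) =
      Matrix.fromBlocks M.toBlocks₁₁ (M.toBlocks₁₂.submatrix id fun _ => j)
        (M.toBlocks₂₁.submatrix (fun _ => i) id)
        (M.toBlocks₂₂.submatrix (fun _ => i) fun _ => j) := by
    ext (_ | _) (_ | _) <;> rfl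
  rw [borderedMinor, hM, Matrix.det_fromBlocks₁₁, Matrix.det_fin_one]
  rfl

theorem det_mul_det_toBlocks₁₁_of_isUnit (M : Matrix (m ⊕ Fin 2) (m ⊕ Fin 2) R)
    (hM : IsUnit M.toBlocks₁₁.det) :
    M.det * M.toBlocks₁₁.det =
      borderedMinor M 0 0 * borderedMinor M 1 1 - borderedMinor M 0 1 * borderedMinor M 1 0 := by
  let _ := Matrix.invertibleOfIsUnitDet _ hM
  simp only [borderedMinor_eq_det_mul_schur]
  conv_lhs => rw [← M.fromBlocks_toBlocks, Matrix.det_fromBlocks₁₁,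
    Matrix.toBlocks_fromBlocks₁₁, Matrix.det_fin_two]
  ring

/-- The Desnanot–Jacobi identity. -/
theorem det_mul_det_toBlocks₁₁ (M : Matrix (m ⊕ Fin 2) (m ⊕ Fin 2) R) :
    M.det * M.toBlocks₁₁.det =
      borderedMinor M 0 0 * borderedMinor M 1 1 - borderedMinor M 0 1 * borderedMinor M 1 0 := by
  let X := Matrix.mvPolynomialX (m ⊕ Fin 2) (m ⊕ Fin 2) ℤ
  have det_ne_zero : X.toBlocks₁₁.det ≠ 0 := fun h => by
    let ev := MvPolynomial.eval fun ij : (m ⊕ Fin 2) × (m ⊕ Fin 2) =>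
      (1 : Matrix (m ⊕ Fin 2) (m ⊕ Fin 2) ℤ) ij.1 ij.2
    have ev_one : ev.mapMatrix X.toBlocks₁₁ = 1 := by
      ext i j
      simp [ev, X, Matrix.toBlocks₁₁, Matrix.one_apply]
    simpa [h, ev_one] using ev.map_det X.toBlocks₁₁
  have generic : X.det * X.toBlocks₁₁.det =
      borderedMinor X 0 0 * borderedMinor X 1 1 - borderedMinor X 0 1 * borderedMinor X 1 0 := by
    let ι := algebraMap (MvPolynomial ((m ⊕ Fin 2) × (m ⊕ Fin 2)) ℤ)
      (FractionRing (MvPolynomial ((m ⊕ Fin 2) × (m ⊕ Fin 2)) ℤ))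
    have hι : Function.Injective ι := IsFractionRing.injective _ _
    apply hι
    simp only [map_mul, map_sub, map_borderedMinor, RingHom.map_det]
    exact det_mul_det_toBlocks₁₁_of_isUnit (X.map ι) <| isUnit_iff_ne_zero.mpr <|
      ι.map_det X.toBlocks₁₁ ▸ (map_ne_zero_iff ι hι).mpr det_ne_zero
  let ev := MvPolynomial.eval₂Hom (Int.castRingHom R)
    fun ij : (m ⊕ Fin 2) × (m ⊕ Fin 2) => M ij.1 ij.2
  have hX : X.map ev = M := Matrix.mvPolynomialX_map_eval₂ _ _
  have specialised := congrArg ev generic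
  simp only [map_mul, map_sub, map_borderedMinor, RingHom.map_det, RingHom.mapMatrix_apply, hX]
    at specialised
  rw [← specialised, ← hX]
  rfl

end Jacobi

section Hankel

theorem derivation_prod {S R ι : Type*} [CommSemiring S] [CommRing R] [Algebra S R] [DecidableEq ι]
    (D : Derivation S R R) (s : Finset ι) (f : ι → R) :
    D (∏ i ∈ s, f i) = ∑ i ∈ s, (∏ j ∈ s.erase i, f j) * D (f i) := by
  induction s using Finset.induction_on with
  | empty => simp
  | insert a s ha ih =>
    rw [prod_insert ha, D.leibniz, ih, sum_insert ha, erase_insert ha, smul_eq_mul, smul_eq_mul,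
      mul_sum, add_comm]
    congr 1
    refine sum_congr rfl fun i hi => ?_
    rw [erase_insert_of_ne (ne_of_mem_of_not_mem hi ha).symm,
      prod_insert (fun h => ha (mem_of_mem_erase h)), mul_assoc]

theorem derivation_det {S R n : Type*} [CommSemiring S] [CommRing R] [Algebra S R] [Fintype n]
    [DecidableEq n] (D : Derivation S R R) (M : Matrix n n R) :
    D M.det = ∑ j, (M.updateCol j fun i => D (M i j)).det := by
  simp only [Matrix.det_apply, map_sum, Units.smul_def, map_zsmul, derivation_prod, smul_sum]
  rw [sum_comm]
  refine sum_congr rfl fun j _ => sum_congr rfl fun σ _ => ?_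
  rw [← prod_erase_mul _ _ (mem_univ j), Matrix.updateCol_self]
  congr 2
  exact prod_congr rfl fun i hi => (Matrix.updateCol_ne (ne_of_mem_erase hi)).symm

variable {R : Type*} [CommRing R]

/-- The Hankel determinant `det (h (i + j))` for `0 ≤ i, j < n`. -/
def hankelDet (h : ℕ → R) (n : ℕ) : R :=
  (Matrix.of fun i j : Fin n => h (i + j)).det

/-- The bordered Hankel determinant of `h` on the row indices `0, …, n - 1, k` and the column
indices `0, …, n - 1, l`. -/
def hankelMinor (h : ℕ → R) (n k l : ℕ) : R :=
  (Matrix.of fun i j : Fin n ⊕ Fin 1 =>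
    h (Sum.elim Fin.val (fun _ => k) i + Sum.elim Fin.val (fun _ => l) j)).det

theorem hankelMinor_comm (h : ℕ → R) (n k l : ℕ) : hankelMinor h n k l = hankelMinor h n l k := by
  rw [hankelMinor, ← Matrix.det_transpose]
  congr 1
  ext i j
  exact congrArg h (add_comm _ _)

theorem hankelDet_succ (h : ℕ → R) (n : ℕ) : hankelDet h (n + 1) = hankelMinor h n n n := by
  rw [hankelDet, ← Matrix.det_submatrix_equiv_self finSumFinEquiv, hankelMinor]
  congr 1
  ext (i | i) (j | j) <;> simp

theorem hankelDet_add_two_mul (h : ℕ → R) (n : ℕ) :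
    hankelDet h (n + 2) * hankelDet h n =
      hankelMinor h n n n * hankelMinor h n (n + 1) (n + 1) - hankelMinor h n n (n + 1) ^ 2 := by
  let M : Matrix (Fin n ⊕ Fin 2) (Fin n ⊕ Fin 2) R :=
    (Matrix.of fun i j : Fin (n + 2) => h (i + j)).submatrix finSumFinEquiv finSumFinEquiv
  have hM : ∀ k l, borderedMinor M k l = hankelMinor h n (n + k) (n + l) := fun k l => by
    rw [borderedMinor, hankelMinor]
    congr 1
    ext (i | i) (j | j) <;> simp [M]
  have hJacobi := det_mul_det_toBlocks₁₁ M
  rw [Matrix.det_submatrix_equiv_self] at hJacobi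
  simp only [hM] at hJacobi
  rw [sq]
  nth_rw 4 [hankelMinor_comm]
  exact hJacobi

variable [Differential R]

/-- The Hankel determinant `det (f^(i + j))` of the successive derivatives of `f`. -/
def hankelTau (f : R) : ℕ → R := hankelDet fun k => (·′)^[k] f

theorem hankelTau_zero (f : R) : hankelTau f 0 = 1 := Matrix.det_fin_zero

theorem hankelTau_one (f : R) : hankelTau f 1 = f := Matrix.det_fin_one _

/-- Differentiating any column but the last yields a repeated column. -/
theorem deriv_hankelMinor (f : R) (n k : ℕ) :
    (hankelMinor (fun k => (·′)^[k] f) n k n)′ =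
      hankelMinor (fun k => (·′)^[k] f) n k (n + 1) := by
  have hcol : ∀ (i : Fin n ⊕ Fin 1) (l : ℕ),
      ((·′)^[Sum.elim Fin.val (fun _ => k) i + l] f)′ =
        (·′)^[Sum.elim Fin.val (fun _ => k) i + (l + 1)] f := fun i l =>
    (Function.iterate_succ_apply' _ _ _).symm
  rw [hankelMinor, derivation_det, Fintype.sum_sum_type, sum_eq_zero, zero_add, Fin.sum_univ_one]
  · rw [hankelMinor]
    congr 1
    ext i (j | j)
    · exact Matrix.updateCol_ne Sum.inl_ne_inr
    · rw [Fin.fin_one_eq_zero j, Matrix.updateCol_self]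
      exact hcol i n
  · intro j _
    obtain ⟨j', hne, hj'⟩ : ∃ j' : Fin n ⊕ Fin 1, j' ≠ Sum.inl j ∧
        Sum.elim Fin.val (fun _ => n) j' = (j : ℕ) + 1 := by
      obtain h | h := (Nat.succ_le_of_lt j.is_lt).lt_or_eq
      · exact ⟨Sum.inl ⟨j + 1, h⟩, by simp [Fin.ext_iff], rfl⟩
      · exact ⟨Sum.inr 0, Sum.inr_ne_inl, h.symm⟩
    refine Matrix.det_zero_of_column_eq hne fun i => ?_
    rw [Matrix.updateCol_ne hne, Matrix.updateCol_self, Matrix.of_apply, hj']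
    exact (hcol i j).symm

theorem deriv_hankelTau_succ (f : R) (n : ℕ) :
    (hankelTau f (n + 1))′ = hankelMinor (fun k => (·′)^[k] f) n n (n + 1) := by
  rw [hankelTau, hankelDet_succ, deriv_hankelMinor]

theorem deriv_deriv_hankelTau_succ (f : R) (n : ℕ) :
    (hankelTau f (n + 1))′′ = hankelMinor (fun k => (·′)^[k] f) n (n + 1) (n + 1) := by
  rw [deriv_hankelTau_succ, hankelMinor_comm, deriv_hankelMinor]

theorem hankelTau_toda (f : R) (n : ℕ) :
    hankelTau f (n + 2) * hankelTau f n =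
      hankelTau f (n + 1) * (hankelTau f (n + 1))′′ - (hankelTau f (n + 1))′ ^ 2 := by
  rw [deriv_deriv_hankelTau_succ, deriv_hankelTau_succ, hankelTau, hankelDet_add_two_mul,
    ← hankelDet_succ]

variable {A B : Type*} [CommRing A] [CommRing B] [Algebra A B] [Differential A] [Differential B]
  [DifferentialAlgebra A B]

theorem algebraMap_iterate_deriv (f : A) (k : ℕ) :
    algebraMap A B ((·′)^[k] f) = (·′)^[k] (algebraMap A B f) :=
  Function.Semiconj.iterate_right (algebraMap.coe_deriv (A := A) (B := B)) k f

theorem algebraMap_hankelTau (f : A) (n : ℕ) :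
    algebraMap A B (hankelTau f n) = hankelTau (algebraMap A B f) n := by
  rw [hankelTau, hankelTau, hankelDet, hankelDet, RingHom.map_det]
  congr 1
  ext i j
  exact algebraMap_iterate_deriv f _

end Hankel

section HankelPainleve

variable {K : Type*} [Field K] [Differential K]

theorem exists_pvTauState {z N a f g : K} (hz : z′ = 1) (hN : N′ = 0) (ha : a′ = 0)
    (h₁ : z * f′ = N * f - (N + a) * g) (h₂ : f′ = g′ - g) {n : ℕ}
    (hne : ∀ j ≤ n + 1, hankelTau f j ≠ 0 ∧ hankelTau g j ≠ 0 ∧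
      1 + Differential.logDeriv (hankelTau f j) - Differential.logDeriv (hankelTau g j) ≠ 0) :
    ∃ w p, PVTauState z N a n w p (hankelTau f n) (hankelTau f (n + 1))
      (hankelTau g n) (hankelTau g (n + 1)) := by
  induction n with
  | zero =>
    simp only [zero_add, hankelTau_zero, hankelTau_one, Nat.cast_zero]
    obtain ⟨hf, hg, hfg⟩ := hne 1 le_rfl
    simp only [hankelTau_one] at hf hg hfg
    exact ⟨_, _, .base hz hN ha hf hg hfg h₁ h₂⟩
  | succ n ih =>
    obtain ⟨w, p, hwp⟩ := ih fun j hj => hne j (hj.trans n.succ.le_succ)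
    obtain ⟨hf₀, hg₀, -⟩ := hne n (by lia)
    obtain ⟨hf₁, hg₁, -⟩ := hne (n + 1) (by lia)
    obtain ⟨hf₂, hg₂, hfg₂⟩ := hne (n + 2) le_rfl
    rw [Nat.cast_succ]
    exact ⟨_, _, hwp.succ hf₀ hf₁ hf₂ hg₀ hg₁ hg₂ hfg₂ (hankelTau_toda f n) (hankelTau_toda g n)⟩

theorem painleveVRel_hankelTau [NeZero (2 : K)] {z N a f g : K} (hz : z′ = 1) (hN : N′ = 0)
    (ha : a′ = 0) (h₁ : z * f′ = N * f - (N + a) * g) (h₂ : f′ = g′ - g) {n : ℕ}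
    (hne : ∀ j ≤ n + 1, hankelTau f j ≠ 0 ∧ hankelTau g j ≠ 0 ∧
      1 + Differential.logDeriv (hankelTau f j) - Differential.logDeriv (hankelTau g j) ≠ 0)
    {w : K} (hw : w = hankelTau g n * hankelTau f (n + 1) /
      (hankelTau f n * hankelTau g (n + 1))) :
    PainleveVRel ((N - n) ^ 2 / 2) (-(N + n + a) ^ 2 / 2) (a - 1) z w w′ w′′ := by
  obtain ⟨v, p, hvp⟩ := exists_pvTauState hz hN ha h₁ h₂ hne
  obtain ⟨hf₀, hg₀, -⟩ := hne n n.le_succ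
  obtain ⟨hf₁, hg₁, -⟩ := hne (n + 1) le_rfl
  obtain rfl : w = v := by
    rw [hw, div_eq_iff (mul_ne_zero hf₀ hg₁), hvp.w_mul, mul_comm]
  exact hvp.toPVSystem.painleveV
    (hw ▸ div_ne_zero (mul_ne_zero hg₀ hf₁) (mul_ne_zero hf₀ hg₁))

end HankelPainleve

/-! ### Polynomials and rational functions as differential rings -/

section PolynomialToda

open Polynomial

variable {k : Type*} [CommRing k]

/-- `k[X]` as a differential ring, with the derivation `d/dX`. -/
instance instDifferentialPolynomial : Differential k[X] :=
  ⟨Polynomial.derivative'.restrictScalars ℤ⟩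

theorem deriv_eq_derivative (f : k[X]) : f′ = derivative f := rfl

theorem coeff_toda [IsDomain k] [CharZero k] {f : k[X]} {d : ℕ} (hd : f.natDegree = d + 1) :
    (f * f′′ - f′ ^ 2).coeff (2 * d) = -(f.leadingCoeff ^ 2 * (d + 1)) := by
  simp only [deriv_eq_derivative]
  rw [leadingCoeff, hd]
  have h₁ : f.derivative.natDegree = d := by
    rw [natDegree_derivative, hd, Nat.add_sub_cancel]
  have hsq : (f.derivative ^ 2).coeff (2 * d) = (f.coeff (d + 1) * (d + 1)) ^ 2 := by
    rw [two_mul, sq, coeff_mul_add_eq_of_natDegree_le h₁.le h₁.le, coeff_derivative, sq]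
  have hmul : (f * f.derivative.derivative).coeff (2 * d) =
      f.coeff (d + 1) ^ 2 * ((d + 1) * d) := by
    cases d with
    | zero => simp [derivative_of_natDegree_zero h₁]
    | succ d =>
      have h₂ : f.derivative.derivative.natDegree = d := by
        rw [natDegree_derivative, h₁, Nat.add_sub_cancel]
      rw [show 2 * (d + 1) = d + 2 + d by ring, coeff_mul_add_eq_of_natDegree_le hd.le h₂.le,
        coeff_derivative, coeff_derivative]
      push_cast
      ring
  rw [coeff_sub, hsq, hmul]
  ring

theorem natDegree_toda [IsDomain k] [CharZero k] {f : k[X]} {d : ℕ} (hd : f.natDegree = d + 1) :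
    f * f′′ - f′ ^ 2 ≠ 0 ∧ (f * f′′ - f′ ^ 2).natDegree = 2 * d := by
  have hf : f ≠ 0 := ne_zero_of_natDegree_gt (n := d) (by lia)
  have hcoeff : (f * f′′ - f′ ^ 2).coeff (2 * d) ≠ 0 := by
    rw [coeff_toda hd]
    exact neg_ne_zero.mpr (mul_ne_zero (pow_ne_zero 2 (leadingCoeff_ne_zero.mpr hf))
      (Nat.cast_add_one_ne_zero d))
  refine ⟨fun h => hcoeff (by rw [h, coeff_zero]), natDegree_eq_of_le_of_coeff_ne_zero ?_ hcoeff⟩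
  have h₁ : (f′).natDegree = d := by
    rw [deriv_eq_derivative, natDegree_derivative, hd, Nat.add_sub_cancel]
  refine (natDegree_sub_le _ _).trans (max_le ?_ (natDegree_pow_le.trans_eq (by rw [h₁])))
  cases d with
  | zero =>
    rw [deriv_eq_derivative, derivative_of_natDegree_zero h₁, mul_zero, natDegree_zero]
  | succ d =>
    refine natDegree_mul_le.trans_eq ?_
    rw [deriv_eq_derivative, natDegree_derivative, h₁, hd]
    lia

theorem hankelTau_natDegree [IsDomain k] [CharZero k] {f : k[X]} (hf : f ≠ 0) {n : ℕ}
    (hn : n ≤ f.natDegree + 1) :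
    hankelTau f n ≠ 0 ∧ (hankelTau f n).natDegree = n * (f.natDegree + 1 - n) := by
  induction n using Nat.twoStepInduction with
  | zero => simp [hankelTau_zero]
  | one => simp [hankelTau_one, hf]
  | more n ih₀ ih₁ =>
    obtain ⟨d, hd⟩ := Nat.exists_eq_add_of_le hn
    obtain ⟨hne₀, hdeg₀⟩ := ih₀ (by lia)
    obtain ⟨-, hdeg₁⟩ := ih₁ (by lia)
    rw [show f.natDegree + 1 - n = d + 2 by lia] at hdeg₀
    rw [show f.natDegree + 1 - (n + 1) = d + 1 by lia] at hdeg₁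
    rw [show f.natDegree + 1 - (n + 2) = d by lia]
    obtain ⟨hne, hdeg⟩ := natDegree_toda (f := hankelTau f (n + 1)) (d := n * d + n + d)
      (by rw [hdeg₁]; ring)
    rw [← hankelTau_toda] at hne hdeg
    have hne₂ := left_ne_zero_of_mul hne
    rw [natDegree_mul hne₂ hne₀, hdeg₀] at hdeg
    exact ⟨hne₂, by linarith⟩

theorem mul_add_deriv_mul_sub_ne_zero [IsDomain k] {f g : k[X]} (hf : f ≠ 0) (hg : g ≠ 0) :
    f * g + f′ * g - f * g′ ≠ 0 := by
  intro h
  have hfg : f * g = f * derivative g - derivative f * g := by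
    linear_combination h + f * deriv_eq_derivative g - g * deriv_eq_derivative f
  refine (lt_irrefl (f * g).degree) ?_
  conv_lhs => rw [hfg]
  refine (degree_sub_le _ _).trans_lt (max_lt ?_ ?_) <;> rw [degree_mul, degree_mul]
  · exact WithBot.add_lt_add_left (degree_ne_bot.mpr hf) (degree_derivative_lt hg)
  · exact WithBot.add_lt_add_right (degree_ne_bot.mpr hg) (degree_derivative_lt hf)

end PolynomialToda

section RationalFunctions

variable (A B : Type*) [CommRing A] [CommRing B] [Algebra A B] [Differential A]
  [Algebra.FormallyEtale A B]

/-- The unique extension of the derivation of `A` to a formally étale `A`-algebra `B`; it exists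
because `Ω[B⁄ℤ] = B ⊗[A] Ω[A⁄ℤ]`. -/
def etaleDeriv : Derivation ℤ B B :=
  ((KaehlerDifferential.isBaseChange_of_formallyEtale ℤ A B).lift
    ((Algebra.linearMap A B).compDer
      (Differential.deriv : Derivation ℤ A A)).liftKaehlerDifferential).compDer
    (KaehlerDifferential.D ℤ B)

theorem etaleDeriv_algebraMap (a : A) : etaleDeriv A B (algebraMap A B a) = algebraMap A B a′ := by
  have hlift := (KaehlerDifferential.isBaseChange_of_formallyEtale ℤ A B).lift_eq
    ((Algebra.linearMap A B).compDer
      (Differential.deriv : Derivation ℤ A A)).liftKaehlerDifferential (KaehlerDifferential.D ℤ A a)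
  rw [KaehlerDifferential.map_D, Derivation.liftKaehlerDifferential_comp_D] at hlift
  exact hlift

variable (k : Type*) [Field k]

theorem formallyEtale_ratFunc : Algebra.FormallyEtale k[X] (RatFunc k) :=
  .of_isLocalization (nonZeroDivisors k[X])

/-- `k(X)` as a differential field, with the derivation `d/dX`. -/
instance instDifferentialRatFunc : Differential (RatFunc k) :=
  have := formallyEtale_ratFunc k
  ⟨etaleDeriv k[X] (RatFunc k)⟩

instance instDifferentialAlgebraRatFunc : DifferentialAlgebra k[X] (RatFunc k) where
  deriv_algebraMap :=
    have := formallyEtale_ratFunc k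
    etaleDeriv_algebraMap k[X] (RatFunc k)

end RationalFunctions

section Evaluation

variable {R : Type*} [CommRing R]

/-- `P_V` for `w = A / B` with the denominators cleared, where `w′ = H / B²` and `w′′ = L / B³`. -/
def painleveVNumer (α β γ z A B H L : R) : R :=
  2 * z ^ 2 * A * (A - B) * L - (z ^ 2 * (3 * A - B) * H ^ 2 - 2 * z * A * (A - B) * H * B
    + 2 * (A - B) ^ 3 * (α * A ^ 2 + β * B ^ 2) + 2 * γ * z * A ^ 2 * (A - B) * B ^ 2
    - z ^ 2 * A ^ 2 * (A + B) * B ^ 2)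

theorem map_painleveVNumer {S : Type*} [CommRing S] (φ : R →+* S) (α β γ z A B H L : R) :
    φ (painleveVNumer α β γ z A B H L) =
      painleveVNumer (φ α) (φ β) (φ γ) (φ z) (φ A) (φ B) (φ H) (φ L) := by
  simp only [painleveVNumer, map_add, map_sub, map_mul, map_pow, map_ofNat]

theorem painleveVRel_div_iff {K : Type*} [Field K] [NeZero (2 : K)] {α β γ z A B H L : K}
    (hz : z ≠ 0) (hA : A ≠ 0) (hB : B ≠ 0) (hAB : A ≠ B) :
    PainleveVRel α β γ z (A / B) (H / B ^ 2) (L / B ^ 3) ↔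
      painleveVNumer α β γ z A B H L = 0 := by
  have h2 : (2 : K) ≠ 0 := NeZero.ne 2
  have hAB' : A - B ≠ 0 := sub_ne_zero.mpr hAB
  have hw : A / B - 1 = (A - B) / B := by field_simp
  rw [PainleveVRel, painleveVNumer, hw, sub_eq_zero]
  field_simp
  constructor <;> intro h <;> linear_combination h

/-- The numerator of the derivative of `A / B ^ n` over the denominator `B ^ (n + 1)`. -/
def quotDerivNumer [Differential R] (n : ℕ) (A B : R) : R := A′ * B - n * A * B′

theorem deriv_div_pow {K : Type*} [Field K] [Differential K] (n : ℕ) (A : K) {B : K} (hB : B ≠ 0) :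
    (A / B ^ n)′ = quotDerivNumer n A B / B ^ (n + 1) := by
  rw [Derivation.leibniz_div, Derivation.leibniz_pow, quotDerivNumer]
  cases n with
  | zero => simp [field]
  | succ n => simp [field]; ring

theorem algebraMap_quotDerivNumer [Differential R] {S : Type*} [CommRing S] [Algebra R S]
    [Differential S] [DifferentialAlgebra R S] (n : ℕ) (A B : R) :
    algebraMap R S (quotDerivNumer n A B) =
      quotDerivNumer n (algebraMap R S A) (algebraMap R S B) := by
  simp only [quotDerivNumer, map_sub, map_mul, map_natCast, deriv_algebraMap]

open Polynomial

variable {𝕜 : Type*} [NontriviallyNormedField 𝕜]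

theorem hasDerivAt_eval_div_pow (n : ℕ) (A B : 𝕜[X]) {x : 𝕜}
    (hB : B.eval x ≠ 0) :
    HasDerivAt (fun y => A.eval y / B.eval y ^ n)
      ((quotDerivNumer n A B).eval x / B.eval x ^ (n + 1)) x := by
  convert! (A.hasDerivAt x).div ((B.hasDerivAt x).pow n) (pow_ne_zero n hB) using 1
  simp only [quotDerivNumer, deriv_eq_derivative, eval_sub, eval_mul, eval_natCast]
  cases n with
  | zero => simp [field]
  | succ n => simp [field]; ring

theorem deriv_eval_div (A B : 𝕜[X]) {x : 𝕜} (hB : B.eval x ≠ 0) :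
    deriv (fun y => A.eval y / B.eval y) x = (quotDerivNumer 1 A B).eval x / B.eval x ^ 2 := by
  simpa using (hasDerivAt_eval_div_pow 1 A B hB).deriv

theorem iteratedDeriv_two_eval_div (A B : 𝕜[X]) {x : 𝕜} (hB : B.eval x ≠ 0) :
    iteratedDeriv 2 (fun y => A.eval y / B.eval y) x =
      (quotDerivNumer 2 (quotDerivNumer 1 A B) B).eval x / B.eval x ^ 3 := by
  have hev : deriv (fun y => A.eval y / B.eval y) =ᶠ[nhds x]
      fun y => (quotDerivNumer 1 A B).eval y / B.eval y ^ 2 := by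
    filter_upwards [B.continuous.continuousAt.eventually_ne hB] with y hy using
      deriv_eval_div A B hy
  rw [iteratedDeriv_succ, iteratedDeriv_one, hev.deriv_eq]
  exact (hasDerivAt_eval_div_pow 2 _ B hB).deriv

theorem pv_eval_div {A B : ℝ[X]} {α β γ x : ℝ} {w : RatFunc ℝ}
    (hw : w = algebraMap ℝ[X] (RatFunc ℝ) A / algebraMap ℝ[X] (RatFunc ℝ) B)
    (h : PainleveVRel (RatFunc.C α) (RatFunc.C β) (RatFunc.C γ) RatFunc.X w w′ w′′)
    (hx : x ≠ 0) (hA : A.eval x ≠ 0) (hB : B.eval x ≠ 0) (hAB : A.eval x ≠ B.eval x) :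
    PV α β γ (fun y => A.eval y / B.eval y) x := by
  change PainleveVRel α β γ x (A.eval x / B.eval x) _ _
  rw [deriv_eval_div A B hB, iteratedDeriv_two_eval_div A B hB, painleveVRel_div_iff hx hA hB hAB]
  have hinj := RatFunc.algebraMap_injective ℝ
  have hA₀ : algebraMap ℝ[X] (RatFunc ℝ) A ≠ 0 :=
    (map_ne_zero_iff _ hinj).mpr fun h => hA (by rw [h, eval_zero])
  have hB₀ : algebraMap ℝ[X] (RatFunc ℝ) B ≠ 0 :=
    (map_ne_zero_iff _ hinj).mpr fun h => hB (by rw [h, eval_zero])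
  have hw₁ : w′ = algebraMap _ _ (quotDerivNumer 1 A B) / algebraMap _ _ B ^ 2 := by
    rw [hw, algebraMap_quotDerivNumer, ← deriv_div_pow 1 _ hB₀, pow_one]
  have hw₂ : w′′ =
      algebraMap _ _ (quotDerivNumer 2 (quotDerivNumer 1 A B) B) / algebraMap _ _ B ^ 3 := by
    rw [hw₁, algebraMap_quotDerivNumer 2, ← deriv_div_pow 2 _ hB₀]
  rw [hw₂, hw₁, hw, painleveVRel_div_iff RatFunc.X_ne_zero hA₀ hB₀
    (hinj.ne fun h => hAB (by rw [h])), ← RatFunc.algebraMap_X, ← RatFunc.algebraMap_C,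
    ← RatFunc.algebraMap_C, ← RatFunc.algebraMap_C, ← map_painleveVNumer,
    map_eq_zero_iff _ hinj] at h
  simpa [map_painleveVNumer] using congrArg (evalRingHom x) h

end Evaluation

/-! ### Laguerre polynomials -/

section Laguerre

open Polynomial

theorem genBinom_eq_descPochhammer (x : ℝ) (k : ℕ) :
    genBinom x k = (descPochhammer ℝ k).eval x / Nat.factorial k := by
  rw [genBinom, descPochhammer_eval_eq_prod_range]

theorem genBinom_zero (x : ℝ) : genBinom x 0 = 1 := by simp [genBinom]

theorem succ_mul_genBinom_add_one (x : ℝ) (k : ℕ) :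
    (k + 1) * genBinom (x + 1) (k + 1) = (x + 1) * genBinom x k := by
  simp only [genBinom_eq_descPochhammer, descPochhammer_succ_left, eval_mul, eval_comp, eval_sub,
    eval_X, eval_one, add_sub_cancel_right, Nat.factorial_succ, Nat.cast_mul, Nat.cast_succ]
  field_simp

theorem succ_mul_genBinom_succ (x : ℝ) (k : ℕ) :
    (k + 1) * genBinom x (k + 1) = (x - k) * genBinom x k := by
  simp only [genBinom_eq_descPochhammer, descPochhammer_succ_eval, Nat.factorial_succ,
    Nat.cast_mul, Nat.cast_succ]
  field_simp

theorem genBinom_add_one_succ (x : ℝ) (k : ℕ) :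
    genBinom (x + 1) (k + 1) = genBinom x k + genBinom x (k + 1) := by
  refine mul_left_cancel₀ (Nat.cast_add_one_ne_zero k : (k : ℝ) + 1 ≠ 0) ?_
  linear_combination succ_mul_genBinom_add_one x k - succ_mul_genBinom_succ x k

/-- `lagL N α` as a polynomial, for a nonnegative index `N`. -/
def laguerre (N : ℕ) (α : ℝ) : ℝ[X] :=
  ∑ k ∈ range (N + 1), C ((-1) ^ k * genBinom (N + α) (N - k) / Nat.factorial k) * X ^ k

theorem coeff_laguerre_of_lt {N k : ℕ} (h : N < k) (α : ℝ) : (laguerre N α).coeff k = 0 := by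
  simp [laguerre, coeff_C_mul, coeff_X_pow, h]

theorem coeff_laguerre_add (k s : ℕ) (α : ℝ) :
    (laguerre (k + s) α).coeff k = (-1) ^ k * genBinom (k + s + α) s / Nat.factorial k := by
  simp [laguerre, coeff_C_mul, coeff_X_pow]

theorem coeff_laguerre_self_ne_zero (N : ℕ) (α : ℝ) : (laguerre N α).coeff N ≠ 0 := by
  have hcoeff := coeff_laguerre_add N 0 α
  rw [genBinom_zero, mul_one, add_zero] at hcoeff
  rw [hcoeff]
  exact div_ne_zero (pow_ne_zero N (by norm_num)) (Nat.cast_ne_zero.mpr N.factorial_ne_zero)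

theorem laguerre_ne_zero (N : ℕ) (α : ℝ) : laguerre N α ≠ 0 := fun h =>
  coeff_laguerre_self_ne_zero N α (by rw [h, coeff_zero])

theorem natDegree_laguerre (N : ℕ) (α : ℝ) : (laguerre N α).natDegree = N :=
  natDegree_eq_of_le_of_coeff_ne_zero
    (natDegree_le_iff_coeff_eq_zero.mpr fun _ hk => coeff_laguerre_of_lt hk α)
    (coeff_laguerre_self_ne_zero N α)

theorem X_mul_deriv_laguerre_succ (N : ℕ) (α : ℝ) :
    X * (laguerre (N + 1) α)′ =
      C (N + 1 : ℝ) * laguerre (N + 1) α - C (N + 1 + α) * laguerre N α := by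
  ext k
  have hX : (X * (laguerre (N + 1) α)′).coeff k = k * (laguerre (N + 1) α).coeff k := by
    rw [deriv_eq_derivative]
    cases k <;> simp [coeff_X_mul, coeff_derivative, mul_comm]
  rw [hX, coeff_sub, coeff_C_mul, coeff_C_mul]
  obtain h | rfl | h := lt_trichotomy k (N + 1)
  · obtain ⟨s, rfl⟩ := Nat.exists_eq_add_of_le (Nat.lt_succ_iff.mp h)
    have habsorb := succ_mul_genBinom_add_one (k + s + α) s
    rw [add_assoc k s 1, coeff_laguerre_add, coeff_laguerre_add]
    push_cast
    rw [show (k + (s + 1) + α : ℝ) = k + s + α + 1 by ring]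
    linear_combination (-1) ^ k / (Nat.factorial k : ℝ) * -habsorb
  · rw [coeff_laguerre_of_lt N.lt_succ_self]
    push_cast
    ring
  · rw [coeff_laguerre_of_lt h, coeff_laguerre_of_lt (by lia)]
    ring

theorem deriv_laguerre_succ (N : ℕ) (α : ℝ) :
    (laguerre (N + 1) α)′ = (laguerre N α)′ - laguerre N α := by
  ext k
  simp only [deriv_eq_derivative, coeff_sub, coeff_derivative]
  obtain h | h := lt_or_ge N k
  · simp only [coeff_laguerre_of_lt, h, Nat.lt_add_right 1 h, Nat.add_lt_add_right h 1, zero_mul,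
      sub_zero]
  obtain ⟨s, rfl⟩ := Nat.exists_eq_add_of_le h
  have hk : (Nat.factorial (k + 1) : ℝ) = (k + 1) * Nat.factorial k := by
    rw [Nat.factorial_succ, Nat.cast_mul, Nat.cast_succ]
  rw [add_right_comm k s 1, coeff_laguerre_add, coeff_laguerre_add, hk]
  cases s with
  | zero =>
    rw [coeff_laguerre_of_lt (by lia), genBinom_zero, genBinom_zero]
    field_simp
    ring
  | succ s =>
    have hpascal := genBinom_add_one_succ (k + 1 + s + α) s
    rw [← add_assoc k s 1, add_right_comm k s 1, coeff_laguerre_add, hk]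
    push_cast
    rw [show (k + 1 + (s + 1) + α : ℝ) = k + 1 + s + α + 1 by ring, hpascal,
      show (k + (s + 1) + α : ℝ) = k + 1 + s + α by ring]
    field_simp
    ring

theorem lagL_natCast (N : ℕ) (α : ℝ) : lagL N α = fun z => (laguerre N α).eval z := by
  funext z
  simp only [lagL, laguerre, eval_finsetSum, eval_mul, eval_C, eval_pow, eval_X, Int.toNat_natCast,
    Int.cast_natCast, if_neg (Int.natCast_nonneg N).not_gt]
  exact Finset.sum_congr rfl fun k _ => by ring

theorem iteratedDeriv_eval {𝕜 : Type*} [NontriviallyNormedField 𝕜] (p : 𝕜[X]) (k : ℕ) :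
    iteratedDeriv k (fun z => p.eval z) = fun z => ((·′)^[k] p).eval z := by
  induction k with
  | zero => rw [iteratedDeriv_zero, Function.iterate_zero_apply]
  | succ k ih =>
    rw [iteratedDeriv_succ, ih, Function.iterate_succ_apply']
    exact funext fun z => Polynomial.deriv _

theorem genLag_eq_eval_hankelTau {m : ℤ} {n N : ℕ} (h : m + n = N) (μ z : ℝ) :
    genLag m n μ z = (hankelTau (laguerre N (μ + 1)) n).eval z := by
  rw [genLag, hankelTau, hankelDet, h, lagL_natCast, ← coe_evalRingHom, RingHom.map_det]
  congr 1
  ext i j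
  simp only [Matrix.of_apply, iteratedDeriv_eval, RingHom.mapMatrix_apply, Matrix.map_apply,
    coe_evalRingHom]

theorem one_add_logDeriv_sub_logDeriv_ne_zero {k : Type*} [Field k] {f g : k[X]} (hf : f ≠ 0)
    (hg : g ≠ 0) :
    1 + Differential.logDeriv (algebraMap k[X] (RatFunc k) f) -
      Differential.logDeriv (algebraMap k[X] (RatFunc k) g) ≠ 0 := by
  have hinj := RatFunc.algebraMap_injective k
  have hf₀ := (map_ne_zero_iff _ hinj).mpr hf
  have hg₀ := (map_ne_zero_iff _ hinj).mpr hg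
  have hfg : 1 + Differential.logDeriv (algebraMap k[X] (RatFunc k) f) -
      Differential.logDeriv (algebraMap k[X] (RatFunc k) g) =
      algebraMap k[X] (RatFunc k) (f * g + f′ * g - f * g′) /
        algebraMap k[X] (RatFunc k) (f * g) := by
    simp only [Differential.logDeriv, map_sub, map_add, map_mul, deriv_algebraMap]
    field_simp
  rw [hfg]
  exact div_ne_zero ((map_ne_zero_iff _ hinj).mpr (mul_add_deriv_mul_sub_ne_zero hf hg))
    ((map_ne_zero_iff _ hinj).mpr (mul_ne_zero hf hg))

theorem hankelTau_laguerre_ne_zero {N n : ℕ} (h : n ≤ N + 1) (α : ℝ) :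
    hankelTau (laguerre N α) n ≠ 0 :=
  (hankelTau_natDegree (laguerre_ne_zero N α) (by rwa [natDegree_laguerre])).1

theorem deriv_ratFunc_X (k : Type*) [Field k] : (RatFunc.X : RatFunc k)′ = 1 := by
  rw [← RatFunc.algebraMap_X, deriv_algebraMap, deriv_eq_derivative, derivative_X, map_one]

theorem deriv_ratFunc_C {k : Type*} [Field k] (c : k) : (RatFunc.C c)′ = 0 := by
  rw [← RatFunc.algebraMap_C, deriv_algebraMap, deriv_eq_derivative, derivative_C, map_zero]

theorem painleveVRel_laguerre (M n : ℕ) (μ : ℝ) {w : RatFunc ℝ}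
    (hw : w = algebraMap ℝ[X] (RatFunc ℝ) (hankelTau (laguerre (M + n) (μ + 1)) n *
          hankelTau (laguerre (M + n + 1) (μ + 1)) (n + 1)) /
        algebraMap ℝ[X] (RatFunc ℝ) (hankelTau (laguerre (M + n + 1) (μ + 1)) n *
          hankelTau (laguerre (M + n) (μ + 1)) (n + 1))) :
    PainleveVRel (RatFunc.C ((M + 1 : ℝ) ^ 2 / 2)) (RatFunc.C (-(M + 1 + 2 * n + 1 + μ) ^ 2 / 2))
      (RatFunc.C μ) RatFunc.X w w′ w′′ := by
  set F := laguerre (M + n + 1) (μ + 1)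
  set G := laguerre (M + n) (μ + 1)
  let ι := algebraMap ℝ[X] (RatFunc ℝ)
  have h₁ : RatFunc.X * (ι F)′ = RatFunc.C (M + n + 1 : ℝ) * ι F -
      (RatFunc.C (M + n + 1 : ℝ) + RatFunc.C (μ + 1)) * ι G := by
    simpa [ι, deriv_algebraMap] using congrArg ι (X_mul_deriv_laguerre_succ (M + n) (μ + 1))
  have h₂ : (ι F)′ = (ι G)′ - ι G := by
    simpa [ι, deriv_algebraMap] using congrArg ι (deriv_laguerre_succ (M + n) (μ + 1))
  have hne : ∀ j ≤ n + 1, hankelTau (ι F) j ≠ 0 ∧ hankelTau (ι G) j ≠ 0 ∧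
      1 + Differential.logDeriv (hankelTau (ι F) j) -
        Differential.logDeriv (hankelTau (ι G) j) ≠ 0 := fun j hj => by
    have hF : hankelTau F j ≠ 0 := hankelTau_laguerre_ne_zero (by lia) _
    have hG : hankelTau G j ≠ 0 := hankelTau_laguerre_ne_zero (by lia) _
    have hinj := RatFunc.algebraMap_injective ℝ
    rw [← algebraMap_hankelTau, ← algebraMap_hankelTau]
    exact ⟨(map_ne_zero_iff _ hinj).mpr hF, (map_ne_zero_iff _ hinj).mpr hG,
      one_add_logDeriv_sub_logDeriv_ne_zero hF hG⟩
  simp only [map_mul, algebraMap_hankelTau] at hw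
  have hC₂ : RatFunc.C (2 : ℝ) = 2 := map_ofNat _ 2
  convert painleveVRel_hankelTau (deriv_ratFunc_X ℝ) (deriv_ratFunc_C _) (deriv_ratFunc_C _)
    h₁ h₂ hne hw using 1
  all_goals
    simp only [map_div₀, map_pow, map_neg, map_add, map_mul, map_natCast, map_one, hC₂]
    ring

end Laguerre

/-- rational solutions of `P_V` in terms of `T_{m,n}^{(μ)}`. -/
theorem pv_rational_solution_genLag (m n : ℕ) (hm : 1 ≤ m) (hn : 1 ≤ n) (μ : ℝ) (w : ℝ → ℝ)
    (hw : w = fun z =>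
      genLag ((m : ℤ) - 1) n μ z * genLag ((m : ℤ) - 1) (n + 1) μ z /
        (genLag (m : ℤ) n μ z * genLag ((m : ℤ) - 2) (n + 1) μ z)) :
    ∀ z : ℝ, z ≠ 0 → genLag (m : ℤ) n μ z * genLag ((m : ℤ) - 2) (n + 1) μ z ≠ 0 →
      w z ≠ 0 → w z ≠ 1 →
      PV ((m : ℝ) ^ 2 / 2) (-((m : ℝ) + 2 * n + 1 + μ) ^ 2 / 2) μ w z := by
  obtain ⟨M, rfl⟩ := Nat.exists_eq_add_of_le' hm
  intro z hz hB hw₀ hw₁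
  simp only [hw, Nat.cast_succ,
    genLag_eq_eval_hankelTau (show (M + 1 - 1 + n : ℤ) = (M + n : ℕ) by lia),
    genLag_eq_eval_hankelTau (show (M + 1 - 1 + (n + 1 : ℕ) : ℤ) = (M + n + 1 : ℕ) by lia),
    genLag_eq_eval_hankelTau (show (M + 1 + n : ℤ) = (M + n + 1 : ℕ) by lia),
    genLag_eq_eval_hankelTau (show (M + 1 - 2 + (n + 1 : ℕ) : ℤ) = (M + n : ℕ) by lia),
    ← Polynomial.eval_mul] at hB hw₀ hw₁ ⊢
  exact pv_eval_div rfl (painleveVRel_laguerre M n μ rfl) hz (div_ne_zero_iff.mp hw₀).1 hB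
    fun hAB => hw₁ (by rw [hAB, div_self hB])
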